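/- Let p ≥ 7. The quotient group 𝕃(2,3,p)/ℤω is a finite cyclic group of order p−6, generated by the class of x₃. -/

import Mathlib

/-- The relations subgroup of `ℤ³` defining `𝕃(2,3,p)`: generated by
`(2,-3,0)` and `(0,3,-p)`. -/
def Lrel (p : ℕ) : AddSubgroup (ℤ × ℤ × ℤ) :=
  AddSubgroup.closure {(2, -3, 0), (0, 3, -(p : ℤ))}

/-- The abelian group `𝕃(2,3,p)` with generators `x₁, x₂, x₃` and relations
`2x₁ = 3x₂ = p x₃`. -/
abbrev Lgrp (p : ℕ) := (ℤ × ℤ × ℤ) ⧸ Lrel p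

/-- The generator `x₁` of `𝕃(2,3,p)`. -/
def lx1 (p : ℕ) : Lgrp p := QuotientAddGroup.mk (1, 0, 0)

/-- The generator `x₂` of `𝕃(2,3,p)`. -/
def lx2 (p : ℕ) : Lgrp p := QuotientAddGroup.mk (0, 1, 0)

/-- The generator `x₃` of `𝕃(2,3,p)`. -/
def lx3 (p : ℕ) : Lgrp p := QuotientAddGroup.mk (0, 0, 1)

/-- The canonical element `c = p x₃`. -/
def lc (p : ℕ) : Lgrp p := (p : ℤ) • lx3 p

/-- The dualizing element `ω = c - x₁ - x₂ - x₃`. -/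
def lw (p : ℕ) : Lgrp p := lc p - lx1 p - lx2 p - lx3 p

/-- The persistent subset `ℙ = ℤx₃ ∪ (x₂ + ℤx₃)` of `𝕃(2,3,p)`. -/
def Lpersistent (p : ℕ) : Set (Lgrp p) :=
  {y | ∃ m : ℤ, y = m • lx3 p ∨ y = lx2 p + m • lx3 p}

/-!
In `𝕃(2,3,p)` the relations `2x₁ = 3x₂ = px₃ = c` and `c = x₁ + x₂ + x₃ + ω` force
`x₁ = 3(x₃ + ω)` and `x₂ = 2(x₃ + ω)`, hence `px₃ = 6(x₃ + ω)`. So modulo `ω` the group is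
generated by `x₃`, which is killed by `p - 6`; conversely `x₁, x₂, x₃ ↦ 3, 2, 1` respects all the
relations modulo `p - 6`. Hence `𝕃/ℤω ≅ ℤ/(p - 6)` with `x₃ ↦ 1`.
-/

theorem intCast_zmod_natAbs_sub (a b : ℤ) : (a : ZMod (a - b).natAbs) = b := by
  rw [eq_comm, ZMod.intCast_eq_intCast_iff_dvd_sub]
  exact Int.natAbs_dvd.2 dvd_rfl

theorem zmultiples_eq_top_of_equiv_zmod {G : Type*} [AddGroup G] {n : ℕ} (e : G ≃+ ZMod n) {g : G}
    (hg : e g = 1) : AddSubgroup.zmultiples g = ⊤ := by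
  refine (AddSubgroup.eq_top_iff' _).2 fun x ↦ ?_
  obtain ⟨m, hm⟩ := ZMod.intCast_surjective (e x)
  exact ⟨m, e.injective (by simp [hg, hm])⟩

namespace Lgrp

variable {p : ℕ}

theorem two_zsmul_lx1 (p : ℕ) : (2 : ℤ) • lx1 p = (3 : ℤ) • lx2 p := by
  refine QuotientAddGroup.eq_iff_sub_mem.2 (AddSubgroup.subset_closure ?_)
  simp

theorem three_zsmul_lx2 (p : ℕ) : (3 : ℤ) • lx2 p = (p : ℤ) • lx3 p := by
  refine QuotientAddGroup.eq_iff_sub_mem.2 (AddSubgroup.subset_closure ?_)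
  simp

theorem lx2_eq_two_zsmul (p : ℕ) : lx2 p = (2 : ℤ) • (lx3 p + lw p) := by
  rw [lw, lc]
  linear_combination (norm := module) two_zsmul_lx1 p + (2 : ℤ) • three_zsmul_lx2 p

theorem lx1_eq_three_zsmul (p : ℕ) : lx1 p = (3 : ℤ) • (lx3 p + lw p) := by
  rw [lw, lc]
  linear_combination (norm := module) (2 : ℤ) • two_zsmul_lx1 p + (3 : ℤ) • three_zsmul_lx2 p

theorem sub_six_zsmul_lx3 (p : ℕ) : ((p : ℤ) - 6) • lx3 p = (6 : ℤ) • lw p := by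
  linear_combination (norm := module) (3 : ℤ) • lx2_eq_two_zsmul p - three_zsmul_lx2 p

theorem mk_eq_zsmul_add (i j k : ℤ) :
    (QuotientAddGroup.mk (i, j, k) : Lgrp p) = i • lx1 p + j • lx2 p + k • lx3 p := by
  simp only [lx1, lx2, lx3, ← QuotientAddGroup.mk_zsmul, ← QuotientAddGroup.mk_add]
  simp

theorem hom_ext {G : Type*} [AddGroup G] {f g : Lgrp p →+ G} (h₁ : f (lx1 p) = g (lx1 p))
    (h₂ : f (lx2 p) = g (lx2 p)) (h₃ : f (lx3 p) = g (lx3 p)) : f = g := by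
  ext ⟨i, j, k⟩
  simp [mk_eq_zsmul_add, map_zsmul, h₁, h₂, h₃]

section Lift

variable {G : Type*} [AddCommGroup G] {a b c : G}
  (h₁ : (2 : ℤ) • a = (3 : ℤ) • b) (h₂ : (3 : ℤ) • b = (p : ℤ) • c)

/-- The universal property of `𝕃(2,3,p)`: the homomorphism sending `x₁, x₂, x₃` to elements
`a, b, c` with `2a = 3b = pc`. -/
def lift : Lgrp p →+ G :=
  QuotientAddGroup.lift (Lrel p)
    ((zmultiplesHom G a).coprod ((zmultiplesHom G b).coprod (zmultiplesHom G c))) <| by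
    rw [Lrel, AddSubgroup.closure_le]
    rintro _ (rfl | rfl)
    · simp [h₁]
    · simp [h₂]

@[simp]
theorem lift_lx1 : lift h₁ h₂ (lx1 p) = a := by
  simp [lift, lx1]

@[simp]
theorem lift_lx2 : lift h₁ h₂ (lx2 p) = b := by
  simp [lift, lx2]

@[simp]
theorem lift_lx3 : lift h₁ h₂ (lx3 p) = c := by
  simp [lift, lx3]

theorem lift_lw : lift h₁ h₂ (lw p) = (p : ℤ) • c - a - b - c := by
  simp only [lw, lc, map_sub, map_zsmul, lift_lx1, lift_lx2, lift_lx3]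

end Lift

/-- The quotient `𝕃(2,3,p)/ℤω`. -/
abbrev OmegaQuotient (p : ℕ) := Lgrp p ⧸ AddSubgroup.zmultiples (lw p)

namespace OmegaQuotient

theorem mk_lx1_eq_three_zsmul (p : ℕ) :
    (QuotientAddGroup.mk (lx1 p) : OmegaQuotient p) = (3 : ℤ) • QuotientAddGroup.mk (lx3 p) :=
  QuotientAddGroup.eq_iff_sub_mem.2
    ⟨3, by simp only [lx1_eq_three_zsmul, zsmul_add, add_sub_cancel_left]⟩

theorem mk_lx2_eq_two_zsmul (p : ℕ) :
    (QuotientAddGroup.mk (lx2 p) : OmegaQuotient p) = (2 : ℤ) • QuotientAddGroup.mk (lx3 p) :=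
  QuotientAddGroup.eq_iff_sub_mem.2
    ⟨2, by simp only [lx2_eq_two_zsmul, zsmul_add, add_sub_cancel_left]⟩

theorem sub_six_zsmul_mk_lx3 (p : ℕ) :
    ((p : ℤ) - 6) • (QuotientAddGroup.mk (lx3 p) : OmegaQuotient p) = 0 :=
  (QuotientAddGroup.eq_zero_iff _).2 ⟨6, (sub_six_zsmul_lx3 p).symm⟩

theorem natCast_zmod_eq_six (p : ℕ) : (p : ZMod ((p : ℤ) - 6).natAbs) = 6 :=
  mod_cast intCast_zmod_natAbs_sub p 6

/-- The homomorphism `𝕃(2,3,p)/ℤω → ℤ/(p - 6)` sending `x₁, x₂, x₃` to `3, 2, 1`. The modulus is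
`|p - 6|`, so that every `p` is covered; at `p = 6` the target is `ZMod 0 = ℤ`. -/
def toZMod (p : ℕ) : OmegaQuotient p →+ ZMod ((p : ℤ) - 6).natAbs :=
  QuotientAddGroup.lift _
    (lift (a := 3) (b := 2) (c := 1) (by norm_num) (by norm_num [natCast_zmod_eq_six])) <| by
    rw [AddSubgroup.zmultiples_le, AddMonoidHom.mem_ker, lift_lw]
    norm_num [natCast_zmod_eq_six]

@[simp]
theorem toZMod_mk_lx1 (p : ℕ) : toZMod p (QuotientAddGroup.mk (lx1 p)) = 3 := by
  simp [toZMod]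

@[simp]
theorem toZMod_mk_lx2 (p : ℕ) : toZMod p (QuotientAddGroup.mk (lx2 p)) = 2 := by
  simp [toZMod]

@[simp]
theorem toZMod_mk_lx3 (p : ℕ) : toZMod p (QuotientAddGroup.mk (lx3 p)) = 1 := by
  simp [toZMod]

/-- The homomorphism `ℤ/(p - 6) → 𝕃(2,3,p)/ℤω` sending `1` to the class of `x₃`. -/
def ofZMod (p : ℕ) : ZMod ((p : ℤ) - 6).natAbs →+ OmegaQuotient p :=
  ZMod.lift _ ⟨zmultiplesHom _ (QuotientAddGroup.mk (lx3 p)), by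
    rw [zmultiplesHom_apply, natCast_zsmul, natAbs_nsmul_eq_zero]
    exact sub_six_zsmul_mk_lx3 p⟩

theorem ofZMod_intCast (p : ℕ) (m : ℤ) : ofZMod p m = m • QuotientAddGroup.mk (lx3 p) :=
  ZMod.lift_coe _ _ m

theorem ofZMod_comp_toZMod (p : ℕ) : (ofZMod p).comp (toZMod p) = AddMonoidHom.id _ := by
  refine QuotientAddGroup.addMonoidHom_ext _ (hom_ext ?_ ?_ ?_)
  · simpa [mk_lx1_eq_three_zsmul] using ofZMod_intCast p 3
  · simpa [mk_lx2_eq_two_zsmul] using ofZMod_intCast p 2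
  · simpa using ofZMod_intCast p 1

theorem toZMod_comp_ofZMod (p : ℕ) : (toZMod p).comp (ofZMod p) = AddMonoidHom.id _ := by
  ext x
  obtain ⟨m, rfl⟩ := ZMod.intCast_surjective x
  simp [ofZMod_intCast]

/-- The isomorphism `𝕃(2,3,p)/ℤω ≃ ℤ/(p - 6)` sending the class of `x₃` to `1`. -/
def equivZMod (p : ℕ) : OmegaQuotient p ≃+ ZMod ((p : ℤ) - 6).natAbs :=
  (toZMod p).toAddEquiv (ofZMod p) (ofZMod_comp_toZMod p) (toZMod_comp_ofZMod p)

end OmegaQuotient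

end Lgrp

theorem stmt_18_general (p : ℕ) :
    ∃ e : (Lgrp p ⧸ AddSubgroup.zmultiples (lw p)) ≃+ ZMod ((p : ℤ) - 6).natAbs,
      e (QuotientAddGroup.mk (lx3 p)) = 1 :=
  ⟨Lgrp.OmegaQuotient.equivZMod p, Lgrp.OmegaQuotient.toZMod_mk_lx3 p⟩

/-- For `p ≥ 7`, the quotient group `𝕃(2,3,p)/ℤω` is a finite cyclic group of
order `p − 6`, generated by the class of `x₃`. -/
theorem stmt_18 (p : ℕ) (hp : 7 ≤ p) :
    Nat.card (Lgrp p ⧸ AddSubgroup.zmultiples (lw p)) = p - 6 ∧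
    AddSubgroup.zmultiples
      ((QuotientAddGroup.mk (lx3 p)) : Lgrp p ⧸ AddSubgroup.zmultiples (lw p)) = ⊤ := by
  obtain ⟨e, he⟩ := stmt_18_general p
  refine ⟨?_, zmultiples_eq_top_of_equiv_zmod e he⟩
  rw [Nat.card_congr e.toEquiv, Nat.card_zmod]
  omega
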